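/- Let G = (V, E, x) be a finite connected rooted graph with conductances λ ∈ (0,∞)^E, let N ∈ ℕ*, and let yz ∈ E be an edge. Let G̃_N be the graph obtained from G by adding N new vertices t₁,...,t_N on the edge yz (replacing yz by a path y, t₁, ..., t_N, z), and let λ̃ be the conductances on G̃_N defined by: λ̃ = λ on all edges not incident to any of t₁,...,t_N, and λ̃ = (N+1)λ_{yz} on every edge incident to at least one of t₁,...,t_N. Then for every vertex i ∈ V, Var^{IV-GFF}_{G̃_N,λ̃}[φ(i)] ≤ Var^{IV-GFF}_{G,λ}[φ(i)], and for every pair of vertices i,j ∈ V, Var^{IV-GFF}_{G̃_N,λ̃}[φ(i) − φ(j)] ≤ Var^{IV-GFF}_{G,λ}[φ(i) − φ(j)]. -/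

import Mathlib

open scoped ENNReal

noncomputable section

/-- The graph on `V` whose edges are the pairs of distinct vertices carrying a positive
conductance. -/
def supportGraph {V : Type*} (c : V → V → ℝ) : SimpleGraph V :=
  SimpleGraph.fromRel (fun a b => 0 < c a b)

/-- Configurations of the integer-valued Gaussian free field on the rooted graph with
conductances `c` and root `x`: integer-valued height functions vanishing at the root and
(by convention) outside the connected component of the root. -/
def GffConfig {V : Type*} (c : V → V → ℝ) (x : V) : Type _ :=
  {φ : V → ℤ // φ x = 0 ∧ ∀ v : V, ¬ (supportGraph c).Reachable x v → φ v = 0}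

/-- Boltzmann weight `exp(−∑_{ij∈E} λ_{ij}(φ(i)−φ(j))²)` of a configuration (each
unordered pair is counted once, whence the factor `1/2` in the ordered sum). -/
def gffWeight {V : Type*} [Fintype V] (c : V → V → ℝ) (φ : V → ℤ) : ℝ :=
  Real.exp (-((1 : ℝ) / 2 * ∑ i : V, ∑ j : V, c i j * ((φ i - φ j : ℤ) : ℝ) ^ 2))

/-- Partition function of the integer-valued Gaussian free field. -/
def gffZ {V : Type*} [Fintype V] (c : V → V → ℝ) (x : V) : ℝ :=
  ∑' φ : GffConfig c x, gffWeight c φ.val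

/-- Variance of an observable `f` under the integer-valued Gaussian free field
(real-valued formula, meaningful on the connected component of the root). -/
def gffRVar {V : Type*} [Fintype V] (c : V → V → ℝ) (x : V) (f : (V → ℤ) → ℝ) : ℝ :=
  (∑' φ : GffConfig c x, f φ.val ^ 2 * gffWeight c φ.val) / gffZ c x
    - ((∑' φ : GffConfig c x, f φ.val * gffWeight c φ.val) / gffZ c x) ^ 2

open scoped Classical in
/-- Variance of the height `φ(i)` under the integer-valued Gaussian free field, set to
`∞` when `i` is not connected to the root. -/
def gffVar1 {V : Type*} [Fintype V] (c : V → V → ℝ) (x : V) (i : V) : ℝ≥0∞ :=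
  if (supportGraph c).Reachable x i then
    ENNReal.ofReal (gffRVar c x fun φ => ((φ i : ℤ) : ℝ))
  else ⊤

open scoped Classical in
/-- Variance of the height difference `φ(i) − φ(j)` under the integer-valued Gaussian
free field, set to `∞` when `i` or `j` is not connected to the root. -/
def gffVar2 {V : Type*} [Fintype V] (c : V → V → ℝ) (x : V) (i j : V) : ℝ≥0∞ :=
  if (supportGraph c).Reachable x i ∧ (supportGraph c).Reachable x j then
    ENNReal.ofReal (gffRVar c x fun φ => ((φ i : ℤ) : ℝ) - ((φ j : ℤ) : ℝ))
  else ⊤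

end

/-- The conductances on the graph obtained from `(V, c)` by adding `N` new vertices
`t₁, …, t_N` (represented by `Sum.inr 0, …, Sum.inr (N−1)`) on the edge `yz`: the edge
`yz` is replaced by the path `y, t₁, …, t_N, z`, every edge of which carries the
conductance `(N+1)·λ_{yz}`; all other conductances are unchanged. -/
noncomputable def addPathCond {V : Type*} [DecidableEq V]
    (c : V → V → ℝ) (y z : V) (N : ℕ) : V ⊕ Fin N → V ⊕ Fin N → ℝ
  | Sum.inl a, Sum.inl b => if (a = y ∧ b = z) ∨ (a = z ∧ b = y) then 0 else c a b
  | Sum.inl a, Sum.inr k =>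
      if (a = y ∧ (k : ℕ) = 0) ∨ (a = z ∧ (k : ℕ) = N - 1) then ((N : ℝ) + 1) * c y z
      else 0
  | Sum.inr k, Sum.inl a =>
      if (a = y ∧ (k : ℕ) = 0) ∨ (a = z ∧ (k : ℕ) = N - 1) then ((N : ℝ) + 1) * c y z
      else 0
  | Sum.inr k, Sum.inr l =>
      if (k : ℕ) + 1 = (l : ℕ) ∨ (l : ℕ) + 1 = (k : ℕ) then ((N : ℝ) + 1) * c y z else 0

/-!
A Gaussian weight on a lattice gives every linear observable a larger second moment than its
restriction to a sublattice does (Regev and Stephens-Davidowitz): for independent points `a` of the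
lattice and `b` of the sublattice, the parallelogram law turns `𝔼[l(a)² - l(b)²]` into a sum of
`h(a + b) h(a - b)` with `h = l exp(-Q/2)`, and `a + b`, `a - b` range over all pairs of points
congruent modulo twice the sublattice, so that this is a sum of squares.

Heights on the subdivided graph form a sublattice of those where the path may take values in
`(N + 1)⁻¹ ℤ`. The linear interpolation between the heights at `y` and `z` belongs to that finer
lattice and costs precisely the energy of the edge `yz`, so there the deviation from it is
independent of the heights on `V`, and these have the law of the field on the original graph.
-/

section FiberProduct

variable {A β : Type*}

/-- Pairs of points lying in a common fiber of `π`, grouped by that fiber, so that a sum over them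
splits into products of fiber sums. -/
def sigmaFiberProdEquiv (π : A → β) :
    (Σ q, {a // π a = q} × {a // π a = q}) ≃ {p : A × A // π p.1 = π p.2} where
  toFun s := ⟨(s.2.1, s.2.2), s.2.1.2.trans s.2.2.2.symm⟩
  invFun p := ⟨π p.1.1, ⟨p.1.1, rfl⟩, ⟨p.1.2, p.2.symm⟩⟩
  left_inv := by rintro ⟨_, ⟨a, rfl⟩, b⟩; rfl
  right_inv _ := rfl

lemma tsum_mul_nonneg_of_fiber_eq (π : A → β) {h : A → ℝ} (hh : Summable h) :
    0 ≤ ∑' p : {p : A × A // π p.1 = π p.2}, h p.1.1 * h p.1.2 := by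
  have hprod : Summable fun p : {p : A × A // π p.1 = π p.2} => h p.1.1 * h p.1.2 :=
    (summable_mul_of_summable_norm hh.norm hh.norm).subtype _
  rw [← (sigmaFiberProdEquiv π).tsum_eq]
  refine le_of_le_of_eq ?_ ((sigmaFiberProdEquiv π).summable_iff.mpr hprod).tsum_sigma.symm
  refine tsum_nonneg fun q => ?_
  have hq : Summable fun a : {a // π a = q} => h a := hh.subtype _
  exact (mul_self_nonneg (∑' a : {a // π a = q}, h a)).trans_eq
    (tsum_mul_tsum_of_summable_norm hq.norm hq.norm)

end FiberProduct

section Duplication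

variable {A B : Type*} [AddCommGroup A] [AddCommGroup B] {j : B →+ A}

/-- The change of variables `(a, b) ↦ (a + j b, a - j b)` of the duplication argument, with values
in the pairs that agree modulo `2 j(B)`. -/
def addSubPair (j : B →+ A) (p : A × B) :
    {q : A × A // (q.1 : A ⧸ (2 • j).range) = (q.2 : A ⧸ (2 • j).range)} :=
  ⟨(p.1 + j p.2, p.1 - j p.2), QuotientAddGroup.eq.mpr ⟨-p.2, by
    simp only [AddMonoidHom.smul_apply, map_neg]; abel⟩⟩

variable [IsAddTorsionFree B]

lemma addSubPair_bijective (hj : Function.Injective j) : Function.Bijective (addSubPair j) := by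
  constructor
  · rintro ⟨a, b⟩ ⟨a', b'⟩ h
    obtain ⟨hadd, hsub⟩ := Prod.ext_iff.mp (Subtype.ext_iff.mp h)
    simp only [addSubPair] at hadd hsub
    have hb : 2 • b = 2 • b' := hj <| by
      have hdiff := congrArg₂ (· - ·) hadd hsub
      simpa only [add_sub_sub_cancel, ← two_nsmul, ← map_nsmul] using hdiff
    obtain rfl : b = b' := nsmul_right_injective two_ne_zero hb
    exact Prod.ext (add_right_cancel hadd) rfl
  · rintro ⟨⟨u, v⟩, huv⟩
    obtain ⟨b, hb⟩ := QuotientAddGroup.eq.mp huv.symm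
    simp only [AddMonoidHom.smul_apply] at hb
    refine ⟨(v + j b, b), Subtype.ext (Prod.ext ?_ (add_sub_cancel_right v (j b)))⟩
    change v + j b + j b = u
    rw [add_assoc, ← two_nsmul, hb, add_neg_cancel_left]

lemma tsum_mul_add_sub_nonneg (hj : Function.Injective j) {h : A → ℝ} (hh : Summable h) :
    0 ≤ ∑' p : A × B, h (p.1 + j p.2) * h (p.1 - j p.2) :=
  (tsum_mul_nonneg_of_fiber_eq (QuotientAddGroup.mk (s := (2 • j).range)) hh).trans_eq
    ((Equiv.ofBijective _ (addSubPair_bijective hj)).tsum_eq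
      fun q => h q.1.1 * h q.1.2).symm

end Duplication

/-- The second moment of the observable `f` under the Gibbs measure on `A` with weights
`exp (-Q a)`. -/
noncomputable def gibbsSecondMoment {A : Type*} (Q f : A → ℝ) : ℝ :=
  (∑' a, f a ^ 2 * Real.exp (-Q a)) / ∑' a, Real.exp (-Q a)

section SecondMoment

variable {A B : Type*} {Q : A → ℝ}

lemma tsum_exp_neg_pos [Nonempty A] (hQ : Summable fun a => Real.exp (-Q a)) :
    0 < ∑' a, Real.exp (-Q a) :=
  hQ.tsum_pos (fun _ => (Real.exp_pos _).le) (Classical.arbitrary A) (Real.exp_pos _)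

lemma summable_sq_mul_exp_neg {f : A → ℝ} (hf : Summable fun a => f a * Real.exp (-(Q a / 2))) :
    Summable fun a => f a ^ 2 * Real.exp (-Q a) := by
  have hdiag : Function.Injective fun a : A => (a, a) := fun _ _ h => congrArg Prod.fst h
  refine ((summable_mul_of_summable_norm hf.norm hf.norm).comp_injective hdiag).congr fun a => ?_
  rw [Function.comp_apply, ← neg_div, mul_mul_mul_comm, ← sq, ← Real.exp_add, add_halves]

lemma gibbsSecondMoment_prod_fst [Nonempty B] {R : B → ℝ} {f : A → ℝ}
    (hQ : Summable fun a => Real.exp (-Q a)) (hR : Summable fun b => Real.exp (-R b))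
    (hf : Summable fun a => f a ^ 2 * Real.exp (-Q a)) :
    gibbsSecondMoment (fun p : A × B => Q p.1 + R p.2) (fun p => f p.1) =
      gibbsSecondMoment Q f := by
  simp only [gibbsSecondMoment, neg_add, Real.exp_add, ← mul_assoc]
  rw [← tsum_mul_tsum_of_summable_norm hf.norm hR.norm,
    ← tsum_mul_tsum_of_summable_norm hQ.norm hR.norm,
    mul_div_mul_right _ _ (tsum_exp_neg_pos hR).ne']

variable [AddCommGroup A] [AddCommGroup B]

lemma mul_exp_neg_add_mul_sub (hpar : ∀ a b, Q (a + b) + Q (a - b) = 2 * (Q a + Q b))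
    (l : A →+ ℝ) (a b : A) :
    l (a + b) * Real.exp (-(Q (a + b) / 2)) * (l (a - b) * Real.exp (-(Q (a - b) / 2))) =
      l a ^ 2 * Real.exp (-Q a) * Real.exp (-Q b) -
        Real.exp (-Q a) * (l b ^ 2 * Real.exp (-Q b)) := by
  have hexp : Real.exp (-(Q (a + b) / 2)) * Real.exp (-(Q (a - b) / 2)) =
      Real.exp (-Q a) * Real.exp (-Q b) := by
    rw [← Real.exp_add, ← Real.exp_add]
    congr 1
    linarith [hpar a b]
  rw [mul_mul_mul_comm, hexp, map_add, map_sub]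
  ring

theorem gibbsSecondMoment_comp_le [IsAddTorsionFree B] {j : B →+ A} (hj : Function.Injective j)
    (hpar : ∀ a b, Q (a + b) + Q (a - b) = 2 * (Q a + Q b)) (l : A →+ ℝ)
    (hQ : Summable fun a => Real.exp (-Q a))
    (hl : Summable fun a => l a * Real.exp (-(Q a / 2))) :
    gibbsSecondMoment (Q ∘ j) (l ∘ j) ≤ gibbsSecondMoment Q l := by
  have hl2 : Summable fun a => l a ^ 2 * Real.exp (-Q a) := summable_sq_mul_exp_neg hl
  have hQj : Summable fun b => Real.exp (-Q (j b)) := hQ.comp_injective hj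
  have hl2j : Summable fun b => l (j b) ^ 2 * Real.exp (-Q (j b)) := hl2.comp_injective hj
  have hdup := tsum_mul_add_sub_nonneg hj hl
  simp only [mul_exp_neg_add_mul_sub hpar] at hdup
  rw [(summable_mul_of_summable_norm hl2.norm hQj.norm).tsum_sub
      (summable_mul_of_summable_norm hQ.norm hl2j.norm),
    ← tsum_mul_tsum_of_summable_norm hl2.norm hQj.norm,
    ← tsum_mul_tsum_of_summable_norm hQ.norm hl2j.norm, sub_nonneg, mul_comm] at hdup
  exact (div_le_div_iff₀ (tsum_exp_neg_pos hQj) (tsum_exp_neg_pos hQ)).mpr hdup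

end SecondMoment

section LatticeSums

lemma summable_prod_pi {ι : Type*} [Fintype ι] {α : ι → Type*} {f : ∀ i, α i → ℝ}
    (hf₀ : ∀ i a, 0 ≤ f i a) (hf : ∀ i, Summable (f i)) :
    Summable fun a : ∀ i, α i => ∏ i, f i (a i) := by
  classical
  refine summable_of_sum_le (c := ∏ i, ∑' a, f i a)
    (fun a => Finset.prod_nonneg fun i _ => hf₀ i (a i)) fun s => ?_
  have hsub : s ⊆ Fintype.piFinset fun i => s.image fun a => a i := fun a ha =>
    Fintype.mem_piFinset.mpr fun i => Finset.mem_image_of_mem (fun b => b i) ha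
  calc ∑ a ∈ s, ∏ i, f i (a i)
      ≤ ∑ a ∈ Fintype.piFinset fun i => s.image fun a => a i, ∏ i, f i (a i) :=
        Finset.sum_le_sum_of_subset_of_nonneg hsub
          fun a _ _ => Finset.prod_nonneg fun i _ => hf₀ i (a i)
    _ = ∏ i, ∑ a ∈ s.image fun a => a i, f i a := (Finset.prod_univ_sum _ _).symm
    _ ≤ ∏ i, ∑' a, f i a :=
        Finset.prod_le_prod (fun i _ => Finset.sum_nonneg fun a _ => hf₀ i a)
          fun i _ => (hf i).sum_le_tsum _ fun a _ => hf₀ i a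

lemma summable_exp_neg_mul_int_sq {ε : ℝ} (hε : 0 < ε) :
    Summable fun n : ℤ => Real.exp (-ε * (n : ℝ) ^ 2) := by
  have hnat : Summable fun n : ℕ => Real.exp (-ε * (n : ℝ) ^ 2) :=
    Real.summable_exp_nat_mul_of_ge (neg_lt_zero.mpr hε) fun n => by
      exact_mod_cast Nat.le_self_pow two_ne_zero n
  exact .of_nat_of_neg (by simpa using hnat) (by simpa using hnat)

variable {ι A : Type*} [Fintype ι]

lemma summable_exp_neg_mul_sum_sq {ε : ℝ} (hε : 0 < ε) :
    Summable fun φ : ι → ℤ => Real.exp (-ε * ∑ v, (φ v : ℝ) ^ 2) := by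
  simpa only [Finset.mul_sum, Real.exp_sum] using
    summable_prod_pi (fun _ _ => (Real.exp_pos _).le) fun _ : ι => summable_exp_neg_mul_int_sq hε

/-- `Q` is bounded below by a positive multiple of the squared Euclidean norm of the integer
coordinates `e a` of `a`. -/
def DominatesSqNorm (e : A → ι → ℤ) (Q : A → ℝ) : Prop :=
  ∃ ε > 0, ∀ a, ε * ∑ v, (e a v : ℝ) ^ 2 ≤ Q a

namespace DominatesSqNorm

variable {e : A → ι → ℤ} {Q : A → ℝ}

lemma div_const (hQ : DominatesSqNorm e Q) {k : ℝ} (hk : 0 < k) :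
    DominatesSqNorm e fun a => Q a / k := by
  obtain ⟨ε, hε, hle⟩ := hQ
  refine ⟨ε / k, div_pos hε hk, fun a => ?_⟩
  rw [div_mul_eq_mul_div]
  exact div_le_div_of_nonneg_right (hle a) hk.le

lemma summable_exp_neg (hQ : DominatesSqNorm e Q) (he : Function.Injective e) :
    Summable fun a => Real.exp (-Q a) := by
  obtain ⟨ε, hε, hle⟩ := hQ
  refine ((summable_exp_neg_mul_sum_sq hε).comp_injective he).of_nonneg_of_le
    (fun a => (Real.exp_pos _).le) fun a => Real.exp_le_exp.mpr ?_
  linarith [hle a]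

lemma prod {κ B : Type*} [Fintype κ] {e' : B → κ → ℤ} {R : B → ℝ} (hQ : DominatesSqNorm e Q)
    (hR : DominatesSqNorm e' R) :
    DominatesSqNorm (fun p : A × B => Sum.elim (e p.1) (e' p.2)) fun p => Q p.1 + R p.2 := by
  obtain ⟨ε, hε, hQle⟩ := hQ
  obtain ⟨δ, hδ, hRle⟩ := hR
  refine ⟨min ε δ, lt_min hε hδ, fun p => ?_⟩
  simp only [Fintype.sum_sum_type, Sum.elim_inl, Sum.elim_inr, mul_add]
  refine add_le_add (le_trans ?_ (hQle p.1)) (le_trans ?_ (hRle p.2)) <;> gcongr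
  exacts [min_le_left ε δ, min_le_right ε δ]

end DominatesSqNorm

lemma exists_abs_addMonoidHom_le (l : (ι → ℤ) →+ ℝ) :
    ∃ C, 0 ≤ C ∧ ∀ φ, |l φ| ≤ C * ∑ v, (φ v : ℝ) ^ 2 := by
  classical
  let C := ∑ v, |l fun w => if v = w then 1 else 0|
  have hC : ∀ v, |l fun w => if v = w then 1 else 0| ≤ C := fun v =>
    Finset.single_le_sum (f := fun v => |l fun w => if v = w then 1 else 0|)
      (fun _ _ => abs_nonneg _) (Finset.mem_univ v)
  refine ⟨C, Finset.sum_nonneg fun _ _ => abs_nonneg _, fun φ => ?_⟩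
  have hexpand : l φ = ∑ v, φ v • l fun w => if v = w then 1 else 0 :=
    l.toIntLinearMap.pi_apply_eq_sum_univ φ
  rw [hexpand, Finset.mul_sum]
  refine (Finset.abs_sum_le_sum_abs _ _).trans (Finset.sum_le_sum fun v _ => ?_)
  have hint : |(φ v : ℝ)| ≤ (φ v : ℝ) ^ 2 := by
    exact_mod_cast (sq_abs (φ v)) ▸ Int.le_self_sq |φ v|
  rw [zsmul_eq_mul, abs_mul, mul_comm]
  exact mul_le_mul (hC v) hint (abs_nonneg _) ((abs_nonneg _).trans (hC v))

lemma DominatesSqNorm.summable_mul_exp_neg {e : A → ι → ℤ} {Q : A → ℝ}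
    (hQ : DominatesSqNorm e Q) (he : Function.Injective e) (l : (ι → ℤ) →+ ℝ) :
    Summable fun a => l (e a) * Real.exp (-Q a) := by
  have hhalf := (hQ.div_const two_pos).summable_exp_neg he
  obtain ⟨ε, hε, hle⟩ := hQ
  obtain ⟨C, hC, hl⟩ := exists_abs_addMonoidHom_le l
  refine .of_norm_bounded (hhalf.mul_left (2 * C / ε)) fun a => ?_
  have hlin : |l (e a)| ≤ 2 * C / ε * (Q a / 2) := by
    calc |l (e a)| ≤ C * ∑ v, (e a v : ℝ) ^ 2 := hl (e a)
      _ = C / ε * (ε * ∑ v, (e a v : ℝ) ^ 2) := by field_simp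
      _ ≤ C / ε * Q a := mul_le_mul_of_nonneg_left (hle a) (by positivity)
      _ = 2 * C / ε * (Q a / 2) := by ring
  have hexp : Q a / 2 ≤ Real.exp (Q a / 2) := by linarith [Real.add_one_le_exp (Q a / 2)]
  calc ‖l (e a) * Real.exp (-Q a)‖ = |l (e a)| * Real.exp (-Q a) := by
        rw [norm_mul, Real.norm_eq_abs, Real.norm_of_nonneg (Real.exp_pos _).le]
    _ ≤ 2 * C / ε * Real.exp (Q a / 2) * Real.exp (-Q a) := by
        gcongr
        exact hlin.trans (by gcongr)
    _ = 2 * C / ε * Real.exp (-(Q a / 2)) := by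
        rw [mul_assoc, ← Real.exp_add]
        ring_nf

end LatticeSums

section Energy

variable {V : Type*} [Fintype V]

/-- The Dirichlet energy `∑_{ij ∈ E} c_{ij} (φ(i) - φ(j))²`, as the half sum over ordered pairs that
appears in `gffWeight`. -/
noncomputable def gffEnergy (c : V → V → ℝ) (φ : V → ℤ) : ℝ :=
  1 / 2 * ∑ i, ∑ j, c i j * ((φ i - φ j : ℤ) : ℝ) ^ 2

lemma gffWeight_eq_exp_neg_gffEnergy (c : V → V → ℝ) (φ : V → ℤ) :
    gffWeight c φ = Real.exp (-gffEnergy c φ) := rfl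

lemma gffEnergy_neg (c : V → V → ℝ) (φ : V → ℤ) : gffEnergy c (-φ) = gffEnergy c φ := by
  simp only [gffEnergy, Pi.neg_apply, neg_sub_neg, ← Int.cast_pow, sub_sq_comm]

lemma gffEnergy_add_add_gffEnergy_sub (c : V → V → ℝ) (φ ψ : V → ℤ) :
    gffEnergy c (φ + ψ) + gffEnergy c (φ - ψ) = 2 * (gffEnergy c φ + gffEnergy c ψ) := by
  simp only [gffEnergy, Finset.mul_sum, ← Finset.sum_add_distrib]
  refine Finset.sum_congr rfl fun i _ => Finset.sum_congr rfl fun j _ => ?_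
  simp only [Pi.add_apply, Pi.sub_apply]
  push_cast
  ring

variable {c : V → V → ℝ}

lemma gffEnergy_nonneg (hc : ∀ i j, 0 ≤ c i j) (φ : V → ℤ) : 0 ≤ gffEnergy c φ :=
  mul_nonneg one_half_pos.le <|
    Finset.sum_nonneg fun i _ => Finset.sum_nonneg fun j _ => mul_nonneg (hc i j) (sq_nonneg _)

lemma mul_sq_sub_le_two_mul_gffEnergy (hc : ∀ i j, 0 ≤ c i j) (φ : V → ℤ) (i j : V) :
    c i j * ((φ i - φ j : ℤ) : ℝ) ^ 2 ≤ 2 * gffEnergy c φ := by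
  have hterm : ∀ i j, 0 ≤ c i j * ((φ i - φ j : ℤ) : ℝ) ^ 2 := fun i j =>
    mul_nonneg (hc i j) (sq_nonneg _)
  calc c i j * ((φ i - φ j : ℤ) : ℝ) ^ 2
      ≤ ∑ j, c i j * ((φ i - φ j : ℤ) : ℝ) ^ 2 :=
        Finset.single_le_sum (fun j _ => hterm i j) (Finset.mem_univ j)
    _ ≤ ∑ i, ∑ j, c i j * ((φ i - φ j : ℤ) : ℝ) ^ 2 :=
        Finset.single_le_sum (f := fun i => ∑ j, c i j * ((φ i - φ j : ℤ) : ℝ) ^ 2)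
          (fun i _ => Finset.sum_nonneg fun j _ => hterm i j) (Finset.mem_univ i)
    _ = 2 * gffEnergy c φ := by rw [gffEnergy]; ring

lemma exists_sq_sub_le_mul_gffEnergy_of_adj (hc : ∀ i j, 0 ≤ c i j) {u v : V}
    (h : (supportGraph c).Adj u v) :
    ∃ C, ∀ φ, ((φ u - φ v : ℤ) : ℝ) ^ 2 ≤ C * gffEnergy c φ := by
  have of_pos : ∀ {a b : V}, 0 < c a b →
      ∀ φ, ((φ a - φ b : ℤ) : ℝ) ^ 2 ≤ 2 / c a b * gffEnergy c φ := fun {a b} hab φ => by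
    rw [div_mul_eq_mul_div, le_div_iff₀' hab]
    exact mul_sq_sub_le_two_mul_gffEnergy hc φ a b
  rcases h.2 with huv | hvu
  · exact ⟨_, of_pos huv⟩
  · refine ⟨2 / c v u, fun φ => ?_⟩
    rw [← neg_sub, Int.cast_neg, neg_sq]
    exact of_pos hvu φ

lemma exists_sq_sub_le_mul_gffEnergy (hc : ∀ i j, 0 ≤ c i j) {u v : V}
    (h : (supportGraph c).Reachable u v) :
    ∃ C, ∀ φ, ((φ u - φ v : ℤ) : ℝ) ^ 2 ≤ C * gffEnergy c φ := by
  rw [SimpleGraph.reachable_iff_reflTransGen] at h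
  induction h with
  | refl => exact ⟨0, fun φ => by simp⟩
  | @tail a b _ hab ih =>
    obtain ⟨C, hC⟩ := ih
    obtain ⟨D, hD⟩ := exists_sq_sub_le_mul_gffEnergy_of_adj hc hab
    refine ⟨2 * (C + D), fun φ => ?_⟩
    calc ((φ u - φ b : ℤ) : ℝ) ^ 2
        = (((φ u - φ a : ℤ) : ℝ) + ((φ a - φ b : ℤ) : ℝ)) ^ 2 := by push_cast; ring
      _ ≤ 2 * (((φ u - φ a : ℤ) : ℝ) ^ 2 + ((φ a - φ b : ℤ) : ℝ) ^ 2) := add_sq_le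
      _ ≤ 2 * (C * gffEnergy c φ + D * gffEnergy c φ) := by gcongr <;> simp only [hC, hD]
      _ = 2 * (C + D) * gffEnergy c φ := by ring

end Energy

section RootedHeights

variable {V : Type*}

/-- The group `Ω_V` of integer height functions vanishing at the root `x`. -/
def rootedHeights (x : V) : AddSubgroup (V → ℤ) :=
  (Pi.evalAddMonoidHom (fun _ : V => ℤ) x).ker

lemma tsum_gffConfig {c : V → V → ℝ} (hconn : (supportGraph c).Connected) (x : V)
    (F : (V → ℤ) → ℝ) :
    ∑' φ : GffConfig c x, F φ.val = ∑' φ : rootedHeights x, F φ :=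
  (Equiv.subtypeEquivRight fun _ =>
    ⟨And.left, fun h => ⟨h, fun v hv => absurd (hconn x v) hv⟩⟩ :
    GffConfig c x ≃ rootedHeights x).tsum_eq fun φ => F φ

lemma tsum_eq_zero_of_odd {A : Type*} [AddGroup A] {f : A → ℝ} (hf : ∀ a, f (-a) = -f a) :
    ∑' a, f a = 0 := by
  have hneg := (Equiv.neg A).tsum_eq f
  simp only [Equiv.neg_apply, hf, tsum_neg] at hneg
  linarith

variable [Fintype V] {c : V → V → ℝ}

lemma gffRVar_eq_gibbsSecondMoment (hconn : (supportGraph c).Connected) (x : V)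
    (l : (V → ℤ) →+ ℝ) :
    gffRVar c x l =
      gibbsSecondMoment (fun φ : rootedHeights x => gffEnergy c φ) fun φ => l φ := by
  have hmean : ∑' φ : rootedHeights x, l φ * gffWeight c φ = 0 := tsum_eq_zero_of_odd fun φ => by
    simp only [gffWeight_eq_exp_neg_gffEnergy, AddSubgroup.coe_neg, map_neg, gffEnergy_neg,
      neg_mul]
  simp only [gffRVar, gffZ]
  rw [tsum_gffConfig hconn x fun φ => l φ ^ 2 * gffWeight c φ,
    tsum_gffConfig hconn x fun φ => l φ * gffWeight c φ, tsum_gffConfig hconn x, hmean,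
    zero_div, zero_pow two_ne_zero, sub_zero]
  rfl

lemma dominatesSqNorm_gffEnergy (hc : ∀ i j, 0 ≤ c i j) (hconn : (supportGraph c).Connected)
    (x : V) :
    DominatesSqNorm (fun φ : rootedHeights x => (φ : V → ℤ)) fun φ => gffEnergy c φ := by
  choose C hC using fun v => exists_sq_sub_le_mul_gffEnergy hc (hconn v x)
  refine ⟨1 / (1 + ∑ v, |C v|), by positivity, fun φ => ?_⟩
  rw [div_mul_eq_mul_div, one_mul, div_le_iff₀' (by positivity), add_mul, Finset.sum_mul]
  refine le_add_of_nonneg_of_le (mul_nonneg zero_le_one (gffEnergy_nonneg hc φ)) ?_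
  refine Finset.sum_le_sum fun v _ => ?_
  have hroot : (φ : V → ℤ) x = 0 := φ.2
  calc ((φ : V → ℤ) v : ℝ) ^ 2 ≤ C v * gffEnergy c φ := by simpa [hroot] using hC v φ
    _ ≤ |C v| * gffEnergy c φ :=
      mul_le_mul_of_nonneg_right (le_abs_self _) (gffEnergy_nonneg hc φ)

end RootedHeights

section Subdivision

variable {V : Type*} [DecidableEq V] {c : V → V → ℝ} {y z : V} {N : ℕ}

lemma addPathCond_nonneg (hc : ∀ i j, 0 ≤ c i j) (y z : V) (N : ℕ) (u v : V ⊕ Fin N) :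
    0 ≤ addPathCond c y z N u v := by
  have hpath : 0 ≤ ((N : ℝ) + 1) * c y z := mul_nonneg (by positivity) (hc y z)
  rcases u with a | k <;> rcases v with b | l <;> simp only [addPathCond] <;> split_ifs <;>
    first | exact le_rfl | exact hpath | exact hc _ _

lemma supportGraph_reachable_of_pos {W : Type*} {d : W → W → ℝ} {u v : W} (h : 0 < d u v) :
    (supportGraph d).Reachable u v := by
  rcases eq_or_ne u v with rfl | huv
  · rfl
  · exact SimpleGraph.Adj.reachable ⟨huv, .inl h⟩

lemma addPathCond_reachable_inr (hedge : 0 < c y z) (k : Fin N) :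
    (supportGraph (addPathCond c y z N)).Reachable (Sum.inl y) (Sum.inr k) := by
  have hpath : 0 < ((N : ℝ) + 1) * c y z := by positivity
  obtain ⟨k, hk⟩ := k
  induction k with
  | zero => exact supportGraph_reachable_of_pos (by simp [addPathCond, hpath])
  | succ k ih =>
    exact (ih (by lia)).trans (supportGraph_reachable_of_pos (by simp [addPathCond, hpath]))

lemma addPathCond_reachable_endpoints (hedge : 0 < c y z) (hN : 1 ≤ N) :
    (supportGraph (addPathCond c y z N)).Reachable (Sum.inl y) (Sum.inl z) := by
  have hpath : 0 < ((N : ℝ) + 1) * c y z := by positivity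
  exact (addPathCond_reachable_inr hedge ⟨N - 1, by lia⟩).trans
    (supportGraph_reachable_of_pos (by simp [addPathCond, hpath]))

lemma addPathCond_reachable_inl (hedge : 0 < c y z) (hN : 1 ≤ N) {a b : V}
    (h : (supportGraph c).Reachable a b) :
    (supportGraph (addPathCond c y z N)).Reachable (Sum.inl a) (Sum.inl b) := by
  have of_pos : ∀ {p q : V}, 0 < c p q →
      (supportGraph (addPathCond c y z N)).Reachable (Sum.inl p) (Sum.inl q) := by
    intro p q hpq
    by_cases hcut : (p = y ∧ q = z) ∨ (p = z ∧ q = y)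
    · rcases hcut with ⟨rfl, rfl⟩ | ⟨rfl, rfl⟩
      · exact addPathCond_reachable_endpoints hedge hN
      · exact (addPathCond_reachable_endpoints hedge hN).symm
    · exact supportGraph_reachable_of_pos (by simpa only [addPathCond, if_neg hcut] using hpq)
  rw [SimpleGraph.reachable_iff_reflTransGen] at h
  induction h with
  | refl => rfl
  | tail _ hpq ih => exact ih.trans (hpq.2.elim of_pos fun hqp => (of_pos hqp).symm)

lemma addPathCond_connected (hconn : (supportGraph c).Connected) (hedge : 0 < c y z)
    (hN : 1 ≤ N) : (supportGraph (addPathCond c y z N)).Connected := by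
  refine SimpleGraph.connected_iff_exists_forall_reachable _ |>.mpr ⟨Sum.inl y, ?_⟩
  rintro (v | k)
  · exact addPathCond_reachable_inl hedge hN (hconn y v)
  · exact addPathCond_reachable_inr hedge k

end Subdivision

section PathEnergy

/-- The heights met along the path `y, t₁, …, t_N, z`, given those at its ends. -/
def pathHeights {R : Type*} {N : ℕ} (a b : R) (t : Fin N → R) : Fin (N + 2) → R :=
  Fin.cons a (Fin.snoc t b)

lemma pathHeights_zero {R : Type*} {N : ℕ} (a b : R) (t : Fin N → R) :
    pathHeights a b t 0 = a := rfl

lemma pathHeights_castSucc_succ {R : Type*} {N : ℕ} (a b : R) (t : Fin N → R) (k : Fin N) :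
    pathHeights a b t k.castSucc.succ = t k := by
  rw [pathHeights, Fin.cons_succ, Fin.snoc_castSucc]

lemma pathHeights_last {R : Type*} {N : ℕ} (a b : R) (t : Fin N → R) :
    pathHeights a b t (Fin.last (N + 1)) = b := by
  rw [pathHeights, ← Fin.succ_last, Fin.cons_succ, Fin.snoc_last]

/-- The sum of the squared increments of a finite sequence. -/
def pathEnergy {R : Type*} [CommRing R] {n : ℕ} (p : Fin (n + 1) → R) : R :=
  ∑ k : Fin n, (p k.succ - p k.castSucc) ^ 2

lemma sum_succ_sub_castSucc {M : Type*} [AddCommGroup M] {n : ℕ} (p : Fin (n + 1) → M) :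
    ∑ k : Fin n, (p k.succ - p k.castSucc) = p (Fin.last n) - p 0 := by
  rw [Finset.sum_sub_distrib, sub_eq_sub_iff_add_eq_add, add_comm, ← Fin.sum_univ_succ,
    Fin.sum_univ_castSucc, add_comm]

lemma pathEnergy_mul_sub_chord {R : Type*} [CommRing R] {n : ℕ} (p : Fin (n + 1) → R) :
    pathEnergy (fun k => n * p k - ((n - k) * p 0 + k * p (Fin.last n))) =
      n ^ 2 * pathEnergy p - n * (p (Fin.last n) - p 0) ^ 2 := by
  have hincr : ∀ k : Fin n,
      ((n * p k.succ - ((n - k.succ) * p 0 + k.succ * p (Fin.last n))) -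
          (n * p k.castSucc - ((n - k.castSucc) * p 0 + k.castSucc * p (Fin.last n)))) ^ 2 =
        n ^ 2 * (p k.succ - p k.castSucc) ^ 2 -
          2 * n * (p (Fin.last n) - p 0) * (p k.succ - p k.castSucc) +
            (p (Fin.last n) - p 0) ^ 2 := fun k => by
    simp only [Fin.val_succ, Fin.val_castSucc]
    push_cast
    ring
  simp only [pathEnergy, hincr]
  rw [Finset.sum_add_distrib, Finset.sum_sub_distrib, ← Finset.mul_sum, ← Finset.mul_sum,
    sum_succ_sub_castSucc, Finset.sum_const, Finset.card_univ, Fintype.card_fin, nsmul_eq_mul]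
  ring

lemma pathEnergy_pathHeights {R : Type*} [CommRing R] {n : ℕ} (a b : R) (t : Fin (n + 1) → R) :
    pathEnergy (pathHeights a b t) = (a - t 0) ^ 2 + pathEnergy t + (b - t (Fin.last n)) ^ 2 := by
  have hfirst : pathHeights a b t (Fin.succ 0) = t 0 := pathHeights_castSucc_succ a b t 0
  have hnext : ∀ k : Fin n, pathHeights a b t k.castSucc.succ.succ = t k.succ := fun k =>
    pathHeights_castSucc_succ a b t k.succ
  have hlast : pathHeights a b t (Fin.last n).succ.succ = b := pathHeights_last a b t
  simp only [pathEnergy]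
  rw [Fin.sum_univ_succ, Fin.sum_univ_castSucc]
  simp only [Fin.castSucc_zero, ← Fin.succ_castSucc, pathHeights_zero, hfirst, hnext, hlast,
    pathHeights_castSucc_succ]
  ring

end PathEnergy

section SubdividedEnergy

lemma sum_sum_ite_or {α β M : Type*} [Fintype α] [Fintype β] [DecidableEq α] [DecidableEq β]
    [AddCommMonoid M] {a a' : α} (ha : a ≠ a') (b b' : β) (F : α → β → M) :
    ∑ i, ∑ j, (if (i = a ∧ j = b) ∨ (i = a' ∧ j = b') then F i j else 0) =
      F a b + F a' b' := by
  have hsplit : ∀ i j, (if (i = a ∧ j = b) ∨ (i = a' ∧ j = b') then F i j else 0) =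
      (if i = a then if j = b then F i j else 0 else 0) +
        if i = a' then if j = b' then F i j else 0 else 0 := fun i j => by
    split_ifs <;> simp_all
  simp [hsplit, Finset.sum_add_distrib, Finset.sum_ite_irrel]

lemma sum_sum_ite_val_add_one_eq {M : Type*} [AddCommMonoid M] {n : ℕ}
    (F : Fin (n + 1) → Fin (n + 1) → M) :
    ∑ k : Fin (n + 1), ∑ l : Fin (n + 1), (if (k : ℕ) + 1 = l then F k l else 0) =
      ∑ k : Fin n, F k.castSucc k.succ := by
  have hsucc : ∀ (k : Fin n) (l : Fin (n + 1)), (k.castSucc : ℕ) + 1 = l ↔ k.succ = l :=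
    fun k l => by rw [Fin.ext_iff, Fin.val_succ, Fin.val_castSucc]
  have hlast : ∀ l : Fin (n + 1), (Fin.last n : ℕ) + 1 ≠ l := fun l => by
    rw [Fin.val_last]; lia
  rw [Fin.sum_univ_castSucc]
  simp only [hsucc, hlast, if_false, Finset.sum_ite_eq, Finset.mem_univ, if_true,
    Finset.sum_const_zero, add_zero]

variable {V : Type*} [DecidableEq V] {c : V → V → ℝ} {y z : V} {n : ℕ}

lemma sum_addPathCond_inr_inr (t : Fin (n + 1) → ℤ) :
    ∑ k, ∑ l, addPathCond c y z (n + 1) (Sum.inr k) (Sum.inr l) * ((t k - t l : ℤ) : ℝ) ^ 2 =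
      2 * (((n + 1 : ℕ) + 1) * c y z * pathEnergy t) := by
  have hterm : ∀ k l : Fin (n + 1),
      addPathCond c y z (n + 1) (Sum.inr k) (Sum.inr l) * ((t k - t l : ℤ) : ℝ) ^ 2 =
        (if (k : ℕ) + 1 = l then
            ((n + 1 : ℕ) + 1) * c y z * ((t l - t k : ℤ) : ℝ) ^ 2 else 0) +
          if (l : ℕ) + 1 = k then
            ((n + 1 : ℕ) + 1) * c y z * ((t k - t l : ℤ) : ℝ) ^ 2 else 0 := fun k l => by
    simp only [addPathCond]
    split_ifs <;> first | lia | (push_cast; ring)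
  simp only [hterm, Finset.sum_add_distrib]
  rw [Finset.sum_comm (f := fun k l : Fin (n + 1) => if (l : ℕ) + 1 = k then _ else _),
    sum_sum_ite_val_add_one_eq, ← two_mul, ← Finset.mul_sum, pathEnergy]
  push_cast
  rfl

variable [Fintype V]

lemma sum_addPathCond_inl_inl (hyz : y ≠ z) (hzy : c z y = c y z) (N : ℕ) (φ : V → ℤ) :
    ∑ a, ∑ b, addPathCond c y z N (Sum.inl a) (Sum.inl b) * ((φ a - φ b : ℤ) : ℝ) ^ 2 =
      ∑ a, ∑ b, c a b * ((φ a - φ b : ℤ) : ℝ) ^ 2 - 2 * c y z * ((φ z - φ y : ℤ) : ℝ) ^ 2 := by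
  have hcut := sum_sum_ite_or hyz z y fun a b => c a b * ((φ a - φ b : ℤ) : ℝ) ^ 2
  have hterm : ∀ a b,
      addPathCond c y z N (Sum.inl a) (Sum.inl b) * ((φ a - φ b : ℤ) : ℝ) ^ 2 =
        c a b * ((φ a - φ b : ℤ) : ℝ) ^ 2 -
          if (a = y ∧ b = z) ∨ (a = z ∧ b = y) then c a b * ((φ a - φ b : ℤ) : ℝ) ^ 2 else 0 :=
    fun a b => by simp only [addPathCond]; split_ifs <;> ring
  simp only [hterm, Finset.sum_sub_distrib, hcut, hzy]
  push_cast
  ring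

lemma sum_addPathCond_inl_inr (hyz : y ≠ z) (φ : V → ℤ) (t : Fin (n + 1) → ℤ) :
    ∑ a, ∑ k, addPathCond c y z (n + 1) (Sum.inl a) (Sum.inr k) * ((φ a - t k : ℤ) : ℝ) ^ 2 =
      ((n + 1 : ℕ) + 1) * c y z *
        (((φ y - t 0 : ℤ) : ℝ) ^ 2 + ((φ z - t (Fin.last n) : ℤ) : ℝ) ^ 2) := by
  have hends := sum_sum_ite_or hyz 0 (Fin.last n) fun a k =>
    (((n + 1 : ℕ) : ℝ) + 1) * c y z * ((φ a - t k : ℤ) : ℝ) ^ 2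
  simpa only [addPathCond, ite_mul, zero_mul, mul_add, Fin.ext_iff, Fin.val_zero, Fin.val_last,
    Nat.add_sub_cancel] using hends

lemma sum_addPathCond_inr_inl (hyz : y ≠ z) (φ : V → ℤ) (t : Fin (n + 1) → ℤ) :
    ∑ k, ∑ a, addPathCond c y z (n + 1) (Sum.inr k) (Sum.inl a) * ((t k - φ a : ℤ) : ℝ) ^ 2 =
      ((n + 1 : ℕ) + 1) * c y z *
        (((φ y - t 0 : ℤ) : ℝ) ^ 2 + ((φ z - t (Fin.last n) : ℤ) : ℝ) ^ 2) := by
  rw [← sum_addPathCond_inl_inr hyz, Finset.sum_comm]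
  simp only [addPathCond, Int.cast_sub, sub_sq_comm]

lemma gffEnergy_addPathCond {N : ℕ} (hN : 1 ≤ N) (hyz : y ≠ z) (hzy : c z y = c y z)
    (φ : V → ℤ) (t : Fin N → ℤ) :
    gffEnergy (addPathCond c y z N) (Sum.elim φ t) =
      gffEnergy c φ - c y z * ((φ z - φ y : ℤ) : ℝ) ^ 2 +
        (N + 1) * c y z * pathEnergy (pathHeights (φ y) (φ z) t) := by
  obtain ⟨n, rfl⟩ := Nat.exists_eq_add_of_le' hN
  simp only [gffEnergy, Fintype.sum_sum_type, Sum.elim_inl, Sum.elim_inr, Finset.sum_add_distrib]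
  rw [sum_addPathCond_inl_inl hyz hzy, sum_addPathCond_inl_inr hyz, sum_addPathCond_inr_inl hyz,
    sum_addPathCond_inr_inr, pathEnergy_pathHeights]
  push_cast
  ring

end SubdividedEnergy

section ChordDeviation

variable {V : Type*} {y z : V} {N : ℕ}

/-- The deviation of the heights on the path `y, t₁, …, t_N, z` from their linear interpolation
between `y` and `z`, multiplied by `N + 1` so as to be integral. -/
def chordDeviation (y z : V) (N : ℕ) : (V ⊕ Fin N → ℤ) →+ (Fin N → ℤ) where
  toFun ψ k := (N + 1) * ψ (Sum.inr k) - ((N - k) * ψ (Sum.inl y) + (k + 1) * ψ (Sum.inl z))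
  map_zero' := by ext k; simp
  map_add' ψ ψ' := by ext k; simp only [Pi.add_apply]; ring

lemma pathHeights_zero_zero_chordDeviation (ψ : V ⊕ Fin N → ℤ) :
    pathHeights 0 0 (chordDeviation y z N ψ) = fun k =>
      ((N + 1 : ℕ) : ℤ) * pathHeights (ψ (Sum.inl y)) (ψ (Sum.inl z)) (ψ ∘ Sum.inr) k -
        ((((N + 1 : ℕ) : ℤ) - k) * ψ (Sum.inl y) + k * ψ (Sum.inl z)) := by
  ext k
  cases k using Fin.cases with
  | zero => simp [pathHeights_zero]
  | succ k =>
    cases k using Fin.lastCases with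
    | last => simp [Fin.succ_last, pathHeights_last]
    | cast k => simp [pathHeights_castSucc_succ, chordDeviation]

lemma pathEnergy_pathHeights_chordDeviation (ψ : V ⊕ Fin N → ℤ) :
    pathEnergy (pathHeights 0 0 (chordDeviation y z N ψ)) =
      (N + 1) ^ 2 * pathEnergy (pathHeights (ψ (Sum.inl y)) (ψ (Sum.inl z)) (ψ ∘ Sum.inr)) -
        (N + 1) * (ψ (Sum.inl z) - ψ (Sum.inl y)) ^ 2 := by
  rw [pathHeights_zero_zero_chordDeviation]
  have hchord := pathEnergy_mul_sub_chord
    (pathHeights (ψ (Sum.inl y)) (ψ (Sum.inl z)) (ψ ∘ Sum.inr))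
  simpa only [pathHeights_zero, pathHeights_last, Nat.cast_add_one] using hchord

variable [Fintype V] [DecidableEq V] {c : V → V → ℝ}

lemma gffEnergy_addPathCond_eq_add (hN : 1 ≤ N) (hyz : y ≠ z) (hzy : c z y = c y z)
    (ψ : V ⊕ Fin N → ℤ) :
    gffEnergy (addPathCond c y z N) ψ =
      gffEnergy c (ψ ∘ Sum.inl) +
        gffEnergy (addPathCond c y z N) (Sum.elim 0 (chordDeviation y z N ψ)) / (N + 1) ^ 2 := by
  have hzero : gffEnergy c 0 = 0 := by simp [gffEnergy]
  have hψ := gffEnergy_addPathCond hN hyz hzy (ψ ∘ Sum.inl) (ψ ∘ Sum.inr)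
  rw [Sum.elim_comp_inl_inr] at hψ
  rw [hψ, gffEnergy_addPathCond hN hyz hzy, hzero]
  simp only [Function.comp_apply, Pi.zero_apply, pathEnergy_pathHeights_chordDeviation]
  push_cast
  field_simp
  ring

end ChordDeviation

section Refinement

variable {V : Type*} {x y z : V} {N : ℕ}

/-- Heights on the subdivided graph that are integral on `V` and lie in `(N + 1)⁻¹ ℤ` on the path,
encoded by their restriction to `V` and `N + 1` times their deviation from the chord of the path.
The chord itself is of this kind, whence the product structure. -/
abbrev RefinedHeights (x : V) (N : ℕ) : Type _ := rootedHeights x × (Fin N → ℤ)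

lemma RefinedHeights.elim_injective :
    Function.Injective fun a : RefinedHeights x N => Sum.elim (a.1 : V → ℤ) a.2 := fun _ _ h =>
  have hcoord := Sum.elim_eq_iff.mp h
  Prod.ext (Subtype.ext hcoord.1) hcoord.2

/-- The inclusion of the integer heights on the subdivided graph in the refined heights, in which
they form a sublattice. -/
def toRefinedHeights (x y z : V) (N : ℕ) :
    rootedHeights (Sum.inl x : V ⊕ Fin N) →+ RefinedHeights x N :=
  AddMonoidHom.mk'
    (fun ψ => (⟨(ψ : V ⊕ Fin N → ℤ) ∘ Sum.inl, ψ.2⟩, chordDeviation y z N ψ))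
    fun ψ ψ' => Prod.ext rfl (map_add (chordDeviation y z N) (ψ : V ⊕ Fin N → ℤ) ψ')

lemma toRefinedHeights_injective : Function.Injective (toRefinedHeights x y z N) := by
  refine (injective_iff_map_eq_zero _).mpr fun ψ hψ => ?_
  obtain ⟨hinl, hdev⟩ := Prod.ext_iff.mp hψ
  have hV : ∀ v, (ψ : V ⊕ Fin N → ℤ) (Sum.inl v) = 0 := fun v =>
    congrFun (Subtype.ext_iff.mp hinl) v
  have hpath : ∀ k, (ψ : V ⊕ Fin N → ℤ) (Sum.inr k) = 0 := fun k => by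
    have hk : (N + 1) * (ψ : V ⊕ Fin N → ℤ) (Sum.inr k) -
        ((N - k) * (ψ : V ⊕ Fin N → ℤ) (Sum.inl y) + (k + 1) * (ψ : V ⊕ Fin N → ℤ) (Sum.inl z)) =
          0 := congrFun hdev k
    rw [hV, hV, mul_zero, mul_zero, add_zero, sub_zero] at hk
    exact (mul_eq_zero.mp hk).resolve_left (by positivity)
  exact Subtype.ext (funext (Sum.rec hV hpath))

variable [Fintype V] [DecidableEq V] {c : V → V → ℝ}

/-- The energy due to a deviation `s / (N + 1)` of the path `y, t₁, …, t_N, z` from its chord. -/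
noncomputable def deviationEnergy (c : V → V → ℝ) (y z : V) {N : ℕ} (s : Fin N → ℤ) : ℝ :=
  gffEnergy (addPathCond c y z N) (Sum.elim 0 s) / (N + 1) ^ 2

/-- The extension of the energy of the subdivided graph to the refined heights; in the encoding of
`RefinedHeights` the two summands decouple. -/
noncomputable def refinedEnergy (c : V → V → ℝ) (y z : V) (a : RefinedHeights x N) : ℝ :=
  gffEnergy c a.1 + deviationEnergy c y z a.2

lemma deviationEnergy_add_add_sub (s t : Fin N → ℤ) :
    deviationEnergy c y z (s + t) + deviationEnergy c y z (s - t) =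
      2 * (deviationEnergy c y z s + deviationEnergy c y z t) := by
  have hadd : Sum.elim (0 : V → ℤ) (s + t) = Sum.elim (0 : V → ℤ) s + Sum.elim (0 : V → ℤ) t := by
    ext (v | k) <;> simp
  have hsub : Sum.elim (0 : V → ℤ) (s - t) = Sum.elim (0 : V → ℤ) s - Sum.elim (0 : V → ℤ) t := by
    ext (v | k) <;> simp
  simp only [deviationEnergy, hadd, hsub]
  rw [← add_div, gffEnergy_add_add_gffEnergy_sub, mul_div_assoc, add_div]

lemma refinedEnergy_add_add_sub (a b : RefinedHeights x N) :
    refinedEnergy c y z (a + b) + refinedEnergy c y z (a - b) =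
      2 * (refinedEnergy c y z a + refinedEnergy c y z b) := by
  have hfst := gffEnergy_add_add_gffEnergy_sub c (a.1 : V → ℤ) b.1
  have hsnd := deviationEnergy_add_add_sub (c := c) (y := y) (z := z) a.2 b.2
  simp only [refinedEnergy, Prod.fst_add, Prod.snd_add, Prod.fst_sub, Prod.snd_sub,
    AddSubgroup.coe_add, AddSubgroup.coe_sub]
  linarith

lemma dominatesSqNorm_deviationEnergy (hc : ∀ i j, 0 ≤ c i j) (hconn : (supportGraph c).Connected)
    (hedge : 0 < c y z) (hN : 1 ≤ N) :
    DominatesSqNorm id (deviationEnergy c y z : (Fin N → ℤ) → ℝ) := by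
  obtain ⟨ε, hε, hle⟩ := dominatesSqNorm_gffEnergy (addPathCond_nonneg hc y z N)
    (addPathCond_connected hconn hedge hN) (Sum.inl y)
  refine DominatesSqNorm.div_const ⟨ε, hε, fun s => ?_⟩ (by positivity)
  simpa using hle ⟨Sum.elim 0 s, rfl⟩

lemma dominatesSqNorm_refinedEnergy (hc : ∀ i j, 0 ≤ c i j) (hconn : (supportGraph c).Connected)
    (hedge : 0 < c y z) (hN : 1 ≤ N) (x : V) :
    DominatesSqNorm (fun a : RefinedHeights x N => Sum.elim (a.1 : V → ℤ) a.2)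
      (refinedEnergy c y z) := by
  have hprod := (dominatesSqNorm_gffEnergy hc hconn x).prod
    (dominatesSqNorm_deviationEnergy hc hconn hedge hN)
  exact hprod

theorem gffRVar_addPathCond_le (hc : ∀ i j, 0 ≤ c i j) (hconn : (supportGraph c).Connected)
    (hyz : y ≠ z) (hzy : c z y = c y z) (hedge : 0 < c y z) (hN : 1 ≤ N) (x : V)
    (l : (V → ℤ) →+ ℝ) :
    gffRVar (addPathCond c y z N) (Sum.inl x) (fun ψ => l (ψ ∘ Sum.inl)) ≤ gffRVar c x l := by
  have hV := dominatesSqNorm_gffEnergy hc hconn x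
  have hdev := dominatesSqNorm_deviationEnergy hc hconn hedge hN
  have href := dominatesSqNorm_refinedEnergy hc hconn hedge hN x
  have hcoord := RefinedHeights.elim_injective (x := x) (N := N)
  let lres : (V ⊕ Fin N → ℤ) →+ ℝ := l.comp (LinearMap.funLeft ℤ ℤ Sum.inl).toAddMonoidHom
  let lref : RefinedHeights x N →+ ℝ := (l.comp (rootedHeights x).subtype).comp (.fst _ _)
  calc gffRVar (addPathCond c y z N) (Sum.inl x) lres
      = gibbsSecondMoment (refinedEnergy c y z ∘ toRefinedHeights x y z N)
          (lref ∘ toRefinedHeights x y z N) := by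
        rw [gffRVar_eq_gibbsSecondMoment (addPathCond_connected hconn hedge hN)]
        congr 1
        exact funext fun ψ => gffEnergy_addPathCond_eq_add hN hyz hzy ψ
    _ ≤ gibbsSecondMoment (refinedEnergy c y z) lref :=
        gibbsSecondMoment_comp_le toRefinedHeights_injective refinedEnergy_add_add_sub lref
          (href.summable_exp_neg hcoord)
          ((href.div_const two_pos).summable_mul_exp_neg hcoord lres)
    _ = gibbsSecondMoment (fun φ : rootedHeights x => gffEnergy c φ) fun φ => l φ :=
        gibbsSecondMoment_prod_fst (hV.summable_exp_neg Subtype.val_injective)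
          (hdev.summable_exp_neg Function.injective_id)
          (summable_sq_mul_exp_neg
            ((hV.div_const two_pos).summable_mul_exp_neg Subtype.val_injective l))
    _ = gffRVar c x l := (gffRVar_eq_gibbsSecondMoment hconn x l).symm

end Refinement

/-- **Monotonicity under addition of `N` vertices on an edge.**
Let `G = (V,E,x)` be a finite connected rooted graph with conductances `c ∈ (0,∞)^E`
(encoded as a symmetric nonnegative function whose support graph is connected), let
`N ∈ ℕ*` and let `yz ∈ E` be an edge. Replacing the edge `yz` by a path
`y, t₁, …, t_N, z` whose edges all carry the conductance `(N+1)·λ_{yz}` decreases the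
variance of every height `φ(i)`, `i ∈ V`, and of every height difference `φ(i) − φ(j)`,
`i, j ∈ V`. -/
theorem gff_variance_monotone_path_addition
    {V : Type*} [Fintype V] [DecidableEq V] (x : V) (c : V → V → ℝ)
    (hsym : ∀ i j, c i j = c j i) (hnn : ∀ i j, 0 ≤ c i j)
    (hconn : (supportGraph c).Connected)
    (y z : V) (hyz : y ≠ z) (hedge : 0 < c y z)
    (N : ℕ) (hN : 1 ≤ N) :
    (∀ i : V,
        gffVar1 (addPathCond c y z N) (Sum.inl x) (Sum.inl i) ≤ gffVar1 c x i) ∧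
      (∀ i j : V,
        gffVar2 (addPathCond c y z N) (Sum.inl x) (Sum.inl i) (Sum.inl j)
          ≤ gffVar2 c x i j) := by
  have hconn' := addPathCond_connected hconn hedge hN
  have hle := gffRVar_addPathCond_le hnn hconn hyz (hsym z y) hedge hN x
  let height : V → (V → ℤ) →+ ℝ := fun i => (Int.castAddHom ℝ).comp (Pi.evalAddMonoidHom _ i)
  refine ⟨fun i => ?_, fun i j => ?_⟩
  · rw [gffVar1, gffVar1, if_pos (hconn' _ _), if_pos (hconn x i)]
    exact ENNReal.ofReal_le_ofReal (hle (height i))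
  · rw [gffVar2, gffVar2, if_pos ⟨hconn' _ _, hconn' _ _⟩, if_pos ⟨hconn x i, hconn x j⟩]
    exact ENNReal.ofReal_le_ofReal (hle (height i - height j))
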